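/- arXiv:math/0606092 — 3 statements merged into one kernel-verified Lean document; each statement's English description precedes it below -/
import Mathlib

section
/- Let q be a real number and let (p_n)_{n≥0} be an arbitrary sequence of real numbers. Define β_{n,k} for integers n, k by β_{n,k} = 0 whenever n < 0 or k > n, β_{n,0} = p_n for n ≥ 0, and the recurrence [k+1]_q β_{n,k+1} = q^k [n−k]_q β_{n,k} + [n]_q β_{n−1,k}. Then for all 0 ≤ k ≤ n one has β_{n,k} = [n choose k]_q · Σ_{j=0}^{k} [k choose j]_q q^{(k−j)(k−j−1)/2} p_{n−j}. -/
/-- `[n]_q = 1 + q + ⋯ + q^{n-1}`. -/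
noncomputable def qnum (q : ℝ) (n : ℕ) : ℝ := ∑ i ∈ Finset.range n, q ^ i

/-- `[n]_q! = [1]_q [2]_q ⋯ [n]_q`. -/
noncomputable def qfact (q : ℝ) (n : ℕ) : ℝ := ∏ i ∈ Finset.range n, qnum q (i + 1)

/-- q-binomial coefficient `[n choose k]_q`, with the convention that it is `0` for `k > n`. -/
noncomputable def qbinom (q : ℝ) (n k : ℕ) : ℝ :=
  if k ≤ n then qfact q n / (qfact q (n - k) * qfact q k) else 0

/-- `[n]_q` for an integer index, with value `0` for negative indices. -/
noncomputable def qnumZ (q : ℝ) (n : ℤ) : ℝ :=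
  if 0 ≤ n then ∑ i ∈ Finset.range n.toNat, q ^ i else 0

/-!
Let `(E p) n = p (n - 1)` be the backward shift. By Gauss's binomial formula the sum in the claim
is the value at `n` of `(1 + E) (q + E) ⋯ (q ^ (k - 1) + E) p`, so passing from `k` to `k + 1`
applies one more factor `q ^ k + E`. Multiplied by `[n choose k]_q`, and with the two absorption
identities `[k+1] [n+1 choose k+1] = [n+1] [n choose k]` and
`[k+1] [n choose k+1] = [n-k] [n choose k]`, this becomes the recurrence that determines `β`.
-/

theorem pow_choose_two_succ {M : Type*} [Monoid M] (a : M) (m : ℕ) :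
    a ^ (m + 1).choose 2 = a ^ m * a ^ m.choose 2 := by
  rw [Nat.choose_succ_succ' m 1, Nat.choose_one_right, pow_add]

section QBinomial

variable {q : ℝ}

theorem qnum_add (q : ℝ) (m n : ℕ) : qnum q (m + n) = qnum q m + q ^ m * qnum q n := by
  simp only [qnum, Finset.sum_range_add, Finset.mul_sum, pow_add]

theorem qnumZ_natCast (q : ℝ) (n : ℕ) : qnumZ q n = qnum q n := by
  simp [qnumZ, qnum]

theorem qfact_zero (q : ℝ) : qfact q 0 = 1 :=
  Finset.prod_range_zero _

theorem qfact_succ (q : ℝ) (n : ℕ) : qfact q (n + 1) = qfact q n * qnum q (n + 1) :=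
  Finset.prod_range_succ _ _

theorem qnum_succ_ne_zero (hq : q ≠ -1) (n : ℕ) : qnum q (n + 1) ≠ 0 :=
  geom_sum_ne_zero hq n.succ_ne_zero

theorem qfact_ne_zero (hq : q ≠ -1) (n : ℕ) : qfact q n ≠ 0 :=
  Finset.prod_ne_zero_iff.2 fun i _ => qnum_succ_ne_zero hq i

theorem qbinom_eq_zero_of_lt (q : ℝ) {n k : ℕ} (h : n < k) : qbinom q n k = 0 :=
  if_neg h.not_ge

theorem qbinom_zero_right (hq : q ≠ -1) (n : ℕ) : qbinom q n 0 = 1 := by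
  simp [qbinom, qfact_zero, qfact_ne_zero hq]

theorem qnum_succ_mul_qbinom_succ_succ (hq : q ≠ -1) (n k : ℕ) :
    qnum q (k + 1) * qbinom q (n + 1) (k + 1) = qnum q (n + 1) * qbinom q n k := by
  obtain hnk | hkn := lt_or_ge n k
  · simp [qbinom_eq_zero_of_lt q hnk, qbinom_eq_zero_of_lt q (Nat.succ_lt_succ hnk)]
  · have := qnum_succ_ne_zero hq k
    simp only [qbinom, if_pos hkn, if_pos (Nat.succ_le_succ hkn), Nat.add_sub_add_right, qfact_succ]
    field_simp

theorem qnum_succ_mul_qbinom_succ_right (hq : q ≠ -1) (n k : ℕ) :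
    qnum q (k + 1) * qbinom q n (k + 1) = qnum q (n - k) * qbinom q n k := by
  obtain hnk | hkn := le_or_gt n k
  · simp [qbinom_eq_zero_of_lt q (Nat.lt_succ_of_le hnk), Nat.sub_eq_zero_of_le hnk, qnum]
  · have hsub : n - k = n - (k + 1) + 1 := by omega
    have hk := qnum_succ_ne_zero hq k
    have hnk := qnum_succ_ne_zero hq (n - (k + 1))
    simp only [qbinom, if_pos hkn.le, if_pos (Nat.succ_le_of_lt hkn), hsub, qfact_succ]
    field_simp

theorem qbinom_succ_succ (hq : q ≠ -1) (n k : ℕ) :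
    qbinom q (n + 1) (k + 1) = q ^ (k + 1) * qbinom q n (k + 1) + qbinom q n k := by
  obtain hnk | hkn := lt_or_ge n k
  · simp [qbinom_eq_zero_of_lt q hnk, qbinom_eq_zero_of_lt q (Nat.succ_lt_succ hnk),
      qbinom_eq_zero_of_lt q (Nat.lt_succ_of_lt hnk)]
  · have hsplit : qnum q (n + 1) = qnum q (k + 1) + q ^ (k + 1) * qnum q (n - k) := by
      rw [← qnum_add]
      congr 1
      omega
    apply mul_left_cancel₀ (qnum_succ_ne_zero hq k)
    calc
      qnum q (k + 1) * qbinom q (n + 1) (k + 1)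
          = (qnum q (k + 1) + q ^ (k + 1) * qnum q (n - k)) * qbinom q n k := by
        rw [qnum_succ_mul_qbinom_succ_succ hq, hsplit]
      _ = q ^ (k + 1) * (qnum q (k + 1) * qbinom q n (k + 1))
            + qnum q (k + 1) * qbinom q n k := by
        rw [qnum_succ_mul_qbinom_succ_right hq]
        ring
      _ = qnum q (k + 1) * (q ^ (k + 1) * qbinom q n (k + 1) + qbinom q n k) := by ring

/-- The value at `n` of `(1 + E) (q + E) ⋯ (q ^ (k - 1) + E) p`, where `E` is the backward shift
`(E p) n = p (n - 1)`, expanded in powers of `E` by Gauss's binomial formula. The subtraction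
`n - j` is truncated, so this reading requires `k ≤ n`. -/
noncomputable def qShiftSum (q : ℝ) (p : ℕ → ℝ) (n k : ℕ) : ℝ :=
  ∑ j ∈ Finset.range (k + 1), qbinom q k j * q ^ (k - j).choose 2 * p (n - j)

theorem qShiftSum_zero_right (hq : q ≠ -1) (p : ℕ → ℝ) (n : ℕ) : qShiftSum q p n 0 = p n := by
  simp [qShiftSum, qbinom_zero_right hq]

theorem qbinom_succ_succ_mul_pow_choose_two (hq : q ≠ -1) (k j : ℕ) :
    qbinom q (k + 1) (j + 1) * q ^ (k - j).choose 2 =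
      q ^ k * (qbinom q k (j + 1) * q ^ (k - (j + 1)).choose 2)
        + qbinom q k j * q ^ (k - j).choose 2 := by
  rw [qbinom_succ_succ hq]
  obtain hkj | hjk := le_or_gt k j
  · simp [qbinom_eq_zero_of_lt q (Nat.lt_succ_of_le hkj)]
  · obtain ⟨m, rfl⟩ := Nat.exists_eq_add_of_lt hjk
    have hsub : j + m + 1 - j = m + 1 := by omega
    have hsub' : j + m + 1 - (j + 1) = m := by omega
    rw [hsub, hsub', pow_choose_two_succ]
    ring

theorem qShiftSum_succ_succ (hq : q ≠ -1) (p : ℕ → ℝ) (n k : ℕ) :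
    qShiftSum q p (n + 1) (k + 1) = q ^ k * qShiftSum q p (n + 1) k + qShiftSum q p n k := by
  have hextend : qShiftSum q p (n + 1) k =
      ∑ j ∈ Finset.range (k + 2), qbinom q k j * q ^ (k - j).choose 2 * p (n + 1 - j) := by
    rw [Finset.sum_range_succ, qbinom_eq_zero_of_lt q k.lt_succ_self, zero_mul, zero_mul, add_zero,
      qShiftSum]
  rw [hextend, qShiftSum, qShiftSum, Finset.sum_range_succ', Finset.sum_range_succ' _ (k + 1)]
  simp only [Nat.add_sub_add_right, qbinom_succ_succ_mul_pow_choose_two hq, add_mul,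
    Finset.sum_add_distrib, mul_add, Finset.mul_sum, qbinom_zero_right hq, Nat.sub_zero,
    pow_choose_two_succ, one_mul, mul_assoc]
  ring

theorem qnum_succ_mul_qbinom_mul_qShiftSum (hq : q ≠ -1) (p : ℕ → ℝ) (n k : ℕ) :
    qnum q (k + 1) * (qbinom q (n + 1) (k + 1) * qShiftSum q p (n + 1) (k + 1)) =
      q ^ k * qnum q (n + 1 - k) * (qbinom q (n + 1) k * qShiftSum q p (n + 1) k)
        + qnum q (n + 1) * (qbinom q n k * qShiftSum q p n k) := by
  rw [qShiftSum_succ_succ hq]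
  linear_combination
    q ^ k * qShiftSum q p (n + 1) k * qnum_succ_mul_qbinom_succ_right hq (n + 1) k
      + qShiftSum q p n k * qnum_succ_mul_qbinom_succ_succ hq n k

theorem eq_qbinom_mul_qShiftSum (hq : q ≠ -1) {p : ℕ → ℝ} {b : ℕ → ℕ → ℝ}
    (hinit : ∀ n, b n 0 = p n)
    (hrec : ∀ n k, k ≤ n → qnum q (k + 1) * b (n + 1) (k + 1) =
      q ^ k * qnum q (n + 1 - k) * b (n + 1) k + qnum q (n + 1) * b n k)
    {n k : ℕ} (hkn : k ≤ n) : b n k = qbinom q n k * qShiftSum q p n k := by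
  induction k generalizing n with
  | zero => rw [hinit, qbinom_zero_right hq, qShiftSum_zero_right hq, one_mul]
  | succ k ih =>
    obtain _ | n := n
    · contradiction
    have hkn' : k ≤ n := Nat.le_of_succ_le_succ hkn
    apply mul_left_cancel₀ (qnum_succ_ne_zero hq k)
    rw [hrec n k hkn', ih (Nat.le_succ_of_le hkn'), ih hkn',
      qnum_succ_mul_qbinom_mul_qShiftSum hq]

end QBinomial

theorem stmt0_general (q : ℝ) (hq : q ≠ -1) (p : ℕ → ℝ) (β : ℤ → ℤ → ℝ)
    (hinit : ∀ n : ℕ, β n 0 = p n)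
    (hrec : ∀ n k : ℤ, 0 ≤ k → k < n →
      qnumZ q (k + 1) * β n (k + 1) =
        q ^ k * qnumZ q (n - k) * β n k + qnumZ q n * β (n - 1) k) :
    ∀ n k : ℕ, k ≤ n →
      β n k = qbinom q n k *
        ∑ j ∈ Finset.range (k + 1),
          qbinom q k j * q ^ ((k - j) * (k - j - 1) / 2) * p (n - j) := by
  intro n k hkn
  simp only [← Nat.choose_two_right]
  refine eq_qbinom_mul_qShiftSum hq (b := fun n k => β n k) hinit (fun n k hkn => ?_) hkn
  have hrec_nat := hrec (n + 1 : ℕ) k (by positivity) (by omega)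
  have hpred : ((n + 1 : ℕ) : ℤ) - 1 = n := by push_cast; ring
  rwa [← Nat.cast_sub (by omega), hpred, ← Nat.cast_succ, zpow_natCast, qnumZ_natCast,
    qnumZ_natCast, qnumZ_natCast] at hrec_nat

/-- if `β_{n,k} = 0` for `n < 0` or `k > n`, `β_{n,0} = p_n`, and
`[k+1]_q β_{n,k+1} = q^k [n-k]_q β_{n,k} + [n]_q β_{n-1,k}`, then for `0 ≤ k ≤ n`,
`β_{n,k} = [n choose k]_q ∑_{j=0}^k [k choose j]_q q^{(k-j)(k-j-1)/2} p_{n-j}`. -/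
theorem stmt0 (q : ℝ) (hq0 : 0 < q) (hq1 : q ≤ 1)
    (p : ℕ → ℝ) (β : ℤ → ℤ → ℝ)
    (hzero : ∀ n k : ℤ, n < 0 ∨ n < k → β n k = 0)
    (hinit : ∀ n : ℕ, β n 0 = p n)
    (hrec : ∀ n k : ℤ, 0 ≤ n → 0 ≤ k →
      qnumZ q (k + 1) * β n (k + 1) =
        q ^ k * qnumZ q (n - k) * β n k + qnumZ q n * β (n - 1) k) :
    ∀ n k : ℕ, k ≤ n →
      β n k = qbinom q n k *
        ∑ j ∈ Finset.range (k + 1),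
          qbinom q k j * q ^ ((k - j) * (k - j - 1) / 2) * p (n - j) :=
  stmt0_general q (by linarith) p β hinit fun n k hk hkn => hrec n k (hk.trans hkn.le) hk
end

section
/- Let 0 < q < 1, η > 0, θ ≥ 0, τ ≥ 0 and fix s > 0 and an integer k ≥ 0. Then there exists a constant c ≥ 0 (depending on k, s and the parameters, but not on n) such that |p_n(x_k(s); s)| ≤ c q^{−kn} for all n ≥ 0. -/
/-- `a_n = η⁻¹ + θ[n]_q + [n]_q² ητ`. -/
noncomputable def aCoef (η θ τ q : ℝ) (n : ℕ) : ℝ :=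
  η⁻¹ + θ * qnum q n + (qnum q n) ^ 2 * η * τ

/-- `b_n(t) = (tη + θ + ([n]_q + [n-1]_q)ητ)[n]_q`. -/
noncomputable def bCoef (η θ τ q t : ℝ) (n : ℕ) : ℝ :=
  (t * η + θ + (qnum q n + qnum q (n - 1)) * η * τ) * qnum q n

/-- `c_n(t) = η(t + τ[n-1]_q)[n]_q`. -/
noncomputable def cCoef (η τ q t : ℝ) (n : ℕ) : ℝ :=
  η * (t + τ * qnum q (n - 1)) * qnum q n

/-- `A_n(x,s) = a_n + q^n x - sη q^n [n]_q`. -/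
noncomputable def ACoef (η θ τ q x s : ℝ) (n : ℕ) : ℝ :=
  aCoef η θ τ q n + q ^ n * x - s * η * q ^ n * qnum q n

/-- `x_k(s) = ((sη q^k - θ)[k]_q - η⁻¹ - ητ[k]_q²)/q^k`, the zero of `x ↦ A_k(x,s)`. -/
noncomputable def xPt (η θ τ q s : ℝ) (k : ℕ) : ℝ :=
  ((s * η * q ^ k - θ) * qnum q k - η⁻¹ - η * τ * (qnum q k) ^ 2) / q ^ k

/-!
The coefficients of the recurrence are those of a tridiagonal operator `J` on sequences, and
`n ↦ p_n(x; s)` is the solution of `J u = x u` with `u 0 = 1`. In the signed `q`-binomial weights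
`v_j(n) = ± q^{j(j+1)/2 - jn} [n choose j]_q` the operator becomes bidiagonal,
`J v_j = x_j v_j + (a_{j-1} / q^{j-1}) v_{j-1}`, and its diagonal entries are exactly the points
`x_j(s)`. So the eigenvector for `x_k` is a combination of `v_0, …, v_k`, and
`v_j(n) = O(q^{-jn})`.
-/

section Bidiagonal

variable {R M : Type*} [CommRing R] [AddCommGroup M] [Module R M]

lemma map_sum_smul_of_bidiagonal (f : M →ₗ[R] M) {v : ℕ → M} {d c e : ℕ → R} {x : R}
    (hv_zero : f (v 0) = d 0 • v 0)
    (hv_succ : ∀ j, f (v (j + 1)) = d (j + 1) • v (j + 1) + c j • v j)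
    (he : ∀ j, c j * e (j + 1) = (x - d j) * e j) (m : ℕ) :
    f (∑ j ∈ Finset.range (m + 1), e j • v j) =
      x • ∑ j ∈ Finset.range (m + 1), e j • v j - ((x - d m) * e m) • v m := by
  induction m with
  | zero =>
    simp only [zero_add, Finset.sum_range_one, map_smul, hv_zero]
    module
  | succ m ih =>
    rw [Finset.sum_range_succ, map_add, ih, map_smul, hv_succ, ← he m]
    module

end Bidiagonal

section QNumber

variable {q : ℝ}

lemma qnum_zero (q : ℝ) : qnum q 0 = 0 := Finset.sum_range_zero _

lemma qnum_succ (q : ℝ) (n : ℕ) : qnum q (n + 1) = qnum q n + q ^ n :=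
  Finset.sum_range_succ _ n

lemma one_sub_mul_qnum (q : ℝ) (n : ℕ) : (1 - q) * qnum q n = 1 - q ^ n :=
  mul_neg_geom_sum q n

lemma qnum_nonneg (hq : 0 ≤ q) (n : ℕ) : 0 ≤ qnum q n :=
  Finset.sum_nonneg fun i _ => pow_nonneg hq i

end QNumber

/-- The signed `q`-binomial weight `(-1)^(n + j) q^(j(j+1)/2 - jn) [n choose j]_q`, in whose span
the recurrence is bidiagonal. It is defined by its `q`-Pascal rule, which needs no division by
`q`-factorials. -/
noncomputable def qWeight (q : ℝ) : ℕ → ℕ → ℝ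
  | 0, 0 => 1
  | _ + 1, 0 => 0
  | 0, n + 1 => -qWeight q 0 n
  | j + 1, n + 1 => qWeight q j n / q ^ j - qWeight q (j + 1) n / q ^ (j + 1)

section QWeight

variable {q : ℝ}

lemma qWeight_zero_left (q : ℝ) (n : ℕ) : qWeight q 0 n = (-1) ^ n := by
  induction n with
  | zero => rw [qWeight, pow_zero]
  | succ n ih => rw [qWeight, ih, pow_succ, mul_neg_one]

lemma qnum_mul_qWeight_zero_right (q : ℝ) (j : ℕ) : qnum q j * qWeight q j 0 = 0 := by
  cases j with
  | zero => rw [qnum_zero, zero_mul]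
  | succ j => rw [qWeight, mul_zero]

lemma pow_mul_qnum_mul_qWeight_succ (hq : q ≠ 0) (j n : ℕ) :
    q ^ n * qnum q (j + 1) * qWeight q (j + 1) n =
      q * (qnum q j - qnum q n) * qWeight q j n := by
  induction n generalizing j with
  | zero =>
    rw [qWeight, qnum_zero]
    linear_combination -q * qnum_mul_qWeight_zero_right q j
  | succ n ih =>
    cases j with
    | zero =>
      have h := ih 0
      simp only [zero_add, qWeight, qnum_succ, qnum_zero] at h ⊢
      field_simp
      linear_combination -q * h
    | succ j =>
      have h := ih j
      have h' := ih (j + 1)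
      have hj := one_sub_mul_qnum q j
      have hn := one_sub_mul_qnum q n
      simp only [qWeight, qnum_succ, pow_succ] at h h' ⊢
      field_simp
      linear_combination -h' + q ^ 2 * h + q * q ^ n * qWeight q (j + 1) n * hj
        - q ^ 2 * qWeight q j n * (hj - hn)

lemma qnum_mul_qWeight_add_pred (hq : q ≠ 0) (j n : ℕ) :
    qnum q n * (qWeight q j n + qWeight q j (n - 1)) = qnum q j * qWeight q j n := by
  cases n with
  | zero => rw [qnum_zero, zero_mul, qnum_mul_qWeight_zero_right]
  | succ n =>
    rw [Nat.add_sub_cancel]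
    cases j with
    | zero => simp only [qWeight, qnum_zero]; ring
    | succ j =>
      have h := pow_mul_qnum_mul_qWeight_succ hq j n
      have hj := one_sub_mul_qnum q j
      have hn := one_sub_mul_qnum q n
      simp only [qWeight, qnum_succ, pow_succ] at h ⊢
      field_simp
      linear_combination q * h + q * qWeight q j n * (hn - hj)
        + qWeight q (j + 1) n * ((qnum q n + q ^ n) * hj - (qnum q j + q ^ j) * hn)

lemma qnum_mul_qWeight_succ_add (hq : q ≠ 0) (j n : ℕ) :
    qnum q n * (qWeight q (j + 1) (n + 1) + qWeight q (j + 1) n) =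
      qnum q j / q ^ j * qWeight q j n - qnum q (j + 1) / q ^ (j + 1) * qWeight q (j + 1) n := by
  have h := pow_mul_qnum_mul_qWeight_succ hq j n
  have hj := one_sub_mul_qnum q j
  have hn := one_sub_mul_qnum q n
  simp only [qWeight, qnum_succ, pow_succ] at h ⊢
  field_simp
  linear_combination h + qWeight q (j + 1) n * (qnum q n * hj - (qnum q j + q ^ j) * hn)

lemma qnum_pred_mul_qWeight_succ (q : ℝ) (j n : ℕ) :
    q * qnum q (n - 1) * qWeight q (j + 1) n = (qnum q n - 1) * qWeight q (j + 1) n := by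
  cases n with
  | zero => simp only [qWeight, mul_zero]
  | succ n =>
    rw [Nat.add_sub_cancel, qnum_succ]
    linear_combination -qWeight q (j + 1) (n + 1) * one_sub_mul_qnum q n

end QWeight

/-- The tridiagonal operator on sequences whose eigenvector equation `J u = x u` is the recurrence
for `n ↦ p_n(x; s)`. The value of `u (0 - 1) = u 0` is irrelevant because `c_0 = 0`. -/
noncomputable def jacobiOp (η θ τ q s : ℝ) : (ℕ → ℝ) →ₗ[ℝ] ℕ → ℝ where
  toFun u n := aCoef η θ τ q n * u (n + 1) + bCoef η θ τ q s n * u n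
    + cCoef η τ q s n * u (n - 1)
  map_add' u v := by ext n; simp only [Pi.add_apply]; ring
  map_smul' r u := by ext n; simp only [Pi.smul_apply, smul_eq_mul, RingHom.id_apply]; ring

section JacobiOp

variable {η θ τ q s x : ℝ}

lemma aCoef_pos (hq : 0 ≤ q) (hη : 0 < η) (hθ : 0 ≤ θ) (hτ : 0 ≤ τ) (n : ℕ) :
    0 < aCoef η θ τ q n := by
  have := qnum_nonneg hq n
  unfold aCoef
  positivity

lemma jacobiOp_apply (η θ τ q s : ℝ) (u : ℕ → ℝ) (n : ℕ) :
    jacobiOp η θ τ q s u n = aCoef η θ τ q n * u (n + 1) + bCoef η θ τ q s n * u n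
      + cCoef η τ q s n * u (n - 1) := rfl

lemma jacobiOp_eigenvector_unique (ha : ∀ n, aCoef η θ τ q n ≠ 0) {u v : ℕ → ℝ}
    (hu : jacobiOp η θ τ q s u = x • u) (hv : jacobiOp η θ τ q s v = x • v)
    (h_zero : u 0 = v 0) : u = v := by
  funext n
  induction n using Nat.strong_induction_on with
  | _ n ih =>
    cases n with
    | zero => exact h_zero
    | succ n =>
      have hun := congrFun hu n
      have hvn := congrFun hv n
      rw [jacobiOp_apply, Pi.smul_apply, ih n (by lia), ih (n - 1) (by lia)] at hun
      rw [jacobiOp_apply, Pi.smul_apply] at hvn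
      apply mul_left_cancel₀ (ha n)
      linear_combination hun - hvn

lemma xPt_eq (hq : q ≠ 0) (j : ℕ) :
    xPt η θ τ q s j = s * η * qnum q j - aCoef η θ τ q j / q ^ j := by
  unfold xPt aCoef
  field_simp
  ring

lemma jacobiOp_qWeight_zero (hq : q ≠ 0) :
    jacobiOp η θ τ q s (qWeight q 0) = xPt η θ τ q s 0 • qWeight q 0 := by
  ext n
  have h_pred := qnum_mul_qWeight_add_pred hq 0 n
  rw [jacobiOp_apply, Pi.smul_apply, smul_eq_mul, xPt_eq hq]
  simp only [qWeight, qnum_zero, aCoef, bCoef, cCoef] at h_pred ⊢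
  linear_combination η * (s + τ * qnum q (n - 1)) * h_pred

lemma qnum_sq_mul_qWeight_succ (hq : q ≠ 0) (j n : ℕ) :
    qnum q n ^ 2 * qWeight q (j + 1) (n + 1)
        + (qnum q n + qnum q (n - 1)) * qnum q n * qWeight q (j + 1) n
        + qnum q (n - 1) * qnum q n * qWeight q (j + 1) (n - 1) =
      qnum q j ^ 2 / q ^ j * qWeight q j n
        - qnum q (j + 1) ^ 2 / q ^ (j + 1) * qWeight q (j + 1) n := by
  have h_succ := qnum_mul_qWeight_succ_add hq j n
  have h_pred := qnum_mul_qWeight_add_pred hq (j + 1) n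
  have h_mid : qnum q n * (qnum q j / q ^ j * qWeight q j n
        - qnum q (j + 1) / q ^ (j + 1) * qWeight q (j + 1) n)
      + qnum q (n - 1) * (qnum q (j + 1) * qWeight q (j + 1) n) =
      qnum q j ^ 2 / q ^ j * qWeight q j n
        - qnum q (j + 1) ^ 2 / q ^ (j + 1) * qWeight q (j + 1) n := by
    have h_step := pow_mul_qnum_mul_qWeight_succ hq j n
    have h_shift := qnum_pred_mul_qWeight_succ q j n
    have hj := one_sub_mul_qnum q j
    have hn := one_sub_mul_qnum q n
    simp only [qnum_succ, pow_succ] at h_step ⊢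
    field_simp
    linear_combination qnum q j * h_step + q ^ j * (qnum q j + q ^ j) * h_shift
      + (qnum q j + q ^ j) * qWeight q (j + 1) n * (qnum q n * hj - qnum q j * hn)
  linear_combination qnum q n * h_succ + qnum q (n - 1) * h_pred + h_mid

lemma jacobiOp_qWeight_succ (hq : q ≠ 0) (j : ℕ) :
    jacobiOp η θ τ q s (qWeight q (j + 1)) =
      xPt η θ τ q s (j + 1) • qWeight q (j + 1) + (aCoef η θ τ q j / q ^ j) • qWeight q j := by
  ext n
  have h_pascal : qWeight q (j + 1) (n + 1) =
      qWeight q j n / q ^ j - qWeight q (j + 1) n / q ^ (j + 1) := by rw [qWeight]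
  have h_s := qnum_mul_qWeight_add_pred hq (j + 1) n
  have h_θ := qnum_mul_qWeight_succ_add hq j n
  have h_τ := qnum_sq_mul_qWeight_succ hq j n
  simp only [jacobiOp_apply, Pi.add_apply, Pi.smul_apply, smul_eq_mul, xPt_eq hq, aCoef, bCoef,
    cCoef]
  linear_combination η⁻¹ * h_pascal + s * η * h_s + θ * h_θ + η * τ * h_τ

end JacobiOp

section Growth

open Asymptotics

variable {q : ℝ}

lemma qWeight_succ_isBigO (hq : q ≠ 0) (hq' : |q| < 1) (j : ℕ) :
    qWeight q (j + 1) =O[⊤] fun n => (q ^ n)⁻¹ * qWeight q j n := by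
  have h_abs_pow (m : ℕ) : |q ^ m| ≤ 1 := abs_pow q m ▸ pow_le_one₀ (abs_nonneg q) hq'.le
  have h_denom : 1 - q ^ (j + 1) ≠ 0 := by
    refine sub_ne_zero.2 fun h => ?_
    have h_lt : |q| ^ (j + 1) < 1 := pow_lt_one₀ (abs_nonneg q) hq' j.succ_ne_zero
    rw [← abs_pow, ← h, abs_one] at h_lt
    exact h_lt.false
  refine isBigO_top.2 ⟨|q| * 2 / |1 - q ^ (j + 1)|, fun n => ?_⟩
  have h_ratio : qWeight q (j + 1) n =
      q * (q ^ n - q ^ j) / (1 - q ^ (j + 1)) * ((q ^ n)⁻¹ * qWeight q j n) := by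
    have h_cross : (1 - q ^ (j + 1)) * q ^ n * qWeight q (j + 1) n =
        q * (q ^ n - q ^ j) * qWeight q j n := by
      linear_combination (1 - q) * pow_mul_qnum_mul_qWeight_succ hq j n
        - q ^ n * qWeight q (j + 1) n * one_sub_mul_qnum q (j + 1)
        + q * qWeight q j n * (one_sub_mul_qnum q j - one_sub_mul_qnum q n)
    field_simp
    linear_combination h_cross
  have h_diff : |q ^ n - q ^ j| ≤ 2 :=
    (abs_sub _ _).trans (by linarith [h_abs_pow n, h_abs_pow j])
  rw [h_ratio, norm_mul, Real.norm_eq_abs (_ / _), abs_div, abs_mul]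
  gcongr

lemma qWeight_isBigO (hq : q ≠ 0) (hq' : |q| < 1) (j : ℕ) :
    qWeight q j =O[⊤] fun n => (q ^ (j * n))⁻¹ := by
  induction j with
  | zero => exact isBigO_of_le _ fun n => by simp [qWeight_zero_left]
  | succ j ih =>
    refine ((qWeight_succ_isBigO hq hq' j).trans
      ((isBigO_refl _ _).mul ih)).congr_right fun n => ?_
    rw [Nat.succ_mul, pow_add, mul_inv, mul_comm]

lemma inv_pow_mul_isBigO_of_le (hq : q ≠ 0) (hq' : |q| < 1) {j k : ℕ} (hjk : j ≤ k) :
    (fun n : ℕ => (q ^ (j * n))⁻¹) =O[⊤] fun n => (q ^ (k * n))⁻¹ := by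
  refine isBigO_of_le _ fun n => ?_
  simp only [norm_inv, norm_pow, Real.norm_eq_abs]
  have := abs_pos.2 hq
  exact inv_anti₀ (by positivity)
    (pow_le_pow_of_le_one this.le hq'.le (Nat.mul_le_mul_right n hjk))

end Growth

section Eigenvector

variable {η θ τ q s : ℝ}

/-- The coefficients `e_j = ∏_{i < j} (A_i(x, s) / a_i)` of the formal eigenvector `∑ e_j v_j` of
`jacobiOp` for the eigenvalue `x`, where `v_j` is `qWeight q j`. -/
noncomputable def eigenCoef (η θ τ q s x : ℝ) (j : ℕ) : ℝ :=
  ∏ i ∈ Finset.range j, ACoef η θ τ q x s i / aCoef η θ τ q i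

lemma eigenCoef_succ (hq : q ≠ 0) {j : ℕ} (ha : aCoef η θ τ q j ≠ 0) (x : ℝ) :
    aCoef η θ τ q j / q ^ j * eigenCoef η θ τ q s x (j + 1) =
      (x - xPt η θ τ q s j) * eigenCoef η θ τ q s x j := by
  rw [eigenCoef, Finset.prod_range_succ, ← eigenCoef, xPt_eq hq, ACoef]
  field_simp
  ring

/-- The eigenvector of `jacobiOp` for the eigenvalue `x_k(s)`, a combination of the first `k + 1`
weights. -/
noncomputable def xPtEigenvector (η θ τ q s : ℝ) (k : ℕ) : ℕ → ℝ :=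
  ∑ j ∈ Finset.range (k + 1), eigenCoef η θ τ q s (xPt η θ τ q s k) j • qWeight q j

lemma jacobiOp_xPtEigenvector (hq : q ≠ 0) (ha : ∀ n, aCoef η θ τ q n ≠ 0) (k : ℕ) :
    jacobiOp η θ τ q s (xPtEigenvector η θ τ q s k) =
      xPt η θ τ q s k • xPtEigenvector η θ τ q s k := by
  rw [xPtEigenvector, map_sum_smul_of_bidiagonal (jacobiOp η θ τ q s) (jacobiOp_qWeight_zero hq)
    (jacobiOp_qWeight_succ hq) (fun j => eigenCoef_succ hq (ha j) _) k, sub_self, zero_mul,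
    zero_smul, sub_zero]

lemma xPtEigenvector_zero (η θ τ q s : ℝ) (k : ℕ) : xPtEigenvector η θ τ q s k 0 = 1 := by
  simp [xPtEigenvector, Finset.sum_range_succ', qWeight, eigenCoef]

open Asymptotics in
lemma xPtEigenvector_isBigO (hq : q ≠ 0) (hq' : |q| < 1) (k : ℕ) :
    xPtEigenvector η θ τ q s k =O[⊤] fun n => (q ^ (k * n))⁻¹ :=
  IsBigO.sum fun j hj => ((qWeight_isBigO hq hq' j).trans
    (inv_pow_mul_isBigO_of_le hq hq' (Finset.mem_range_succ_iff.1 hj))).const_smul_left _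

end Eigenvector

theorem stmt9_general {η θ τ q s : ℝ} (hq : q ≠ 0) (hq' : |q| < 1)
    (ha : ∀ n, aCoef η θ τ q n ≠ 0) (k : ℕ) {u : ℕ → ℝ} (hu_zero : u 0 = 1)
    (hu : jacobiOp η θ τ q s u = xPt η θ τ q s k • u) :
    ∃ c : ℝ, 0 ≤ c ∧ ∀ n : ℕ, |u n| ≤ c * (|q| ^ (k * n))⁻¹ := by
  have h_eq : u = xPtEigenvector η θ τ q s k :=
    jacobiOp_eigenvector_unique ha hu (jacobiOp_xPtEigenvector hq ha k)
      (hu_zero.trans (xPtEigenvector_zero η θ τ q s k).symm)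
  obtain ⟨c, hc, h_bound⟩ := (xPtEigenvector_isBigO hq hq' k).exists_nonneg
  refine ⟨c, hc, fun n => ?_⟩
  simpa [h_eq] using Asymptotics.isBigOWith_top.1 h_bound n

/-- for `0 < q < 1`, `η > 0`, `θ ≥ 0`, `τ ≥ 0`, `s > 0` and `k ≥ 0`, there is a
constant `c ≥ 0` (independent of `n`) with `|p_n(x_k(s);s)| ≤ c q^{-kn}` for all `n ≥ 0`. -/
theorem stmt9 (η θ τ q s : ℝ)
    (hq0 : 0 < q) (hq1 : q < 1) (hη : 0 < η) (hθ : 0 ≤ θ) (hτ : 0 ≤ τ) (hs : 0 < s)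
    (k : ℕ)
    (p : ℕ → ℝ → ℝ)
    (hp0 : ∀ y : ℝ, p 0 y = 1)
    (hprec : ∀ (n : ℕ) (y : ℝ), y * p n y =
      aCoef η θ τ q n * p (n + 1) y + bCoef η θ τ q s n * p n y
        + cCoef η τ q s n * p (n - 1) y) :
    ∃ c : ℝ, 0 ≤ c ∧ ∀ n : ℕ, |p n (xPt η θ τ q s k)| ≤ c * (q ^ (k * n))⁻¹ := by
  simpa only [abs_of_pos hq0] using stmt9_general hq0.ne' (abs_lt.2 ⟨by linarith, hq1⟩)
    (fun n => (aCoef_pos hq0.le hη hθ hτ n).ne') k (hp0 _) (funext fun n => (hprec n _).symm)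
end

section
/- Let q = 1, η > 0, θ ≥ 0, τ ≥ 0 and fix s > 0 and an integer k ≥ 0. Then there exists a constant c ≥ 0 (depending on k, s and the parameters, but not on n) such that |p_n(x_k(s); s)| ≤ c n^k for all n ≥ 1. -/
/-! At `q = 1` one has `b_n = a_n + c_n - η⁻¹`, so `u n = (-1)^n p_n(y; s)` solves the difference
equation `a_n (u (n+1) - u n) - c_n (u n - u (n-1)) + (y + η⁻¹) u n = 0`. In the basis of binomial
coefficients `n ↦ n.choose j` the operator on the left is bidiagonal: it sends the `j`-th basis
vector to `A_j(y, s)` times itself plus `a_{j-1}` times its predecessor. Solving for the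
coefficients gives a series with coefficients `∏_{i < j} (-A_i(y, s) / a_i)`, and it stops at
`j = k` when `A_k(y, s) = 0`, that is, when `y = x_k(s)`. Hence `(-1)^n p_n(x_k(s); s)` is a
polynomial in `n` of degree at most `k`. -/

open Finset

theorem cast_sub_mul_choose {R : Type*} [CommRing R] (n j : ℕ) :
    ((n : R) - j) * n.choose j = (j + 1) * n.choose (j + 1) := by
  rcases le_or_gt j n with h | h
  · rw [← Nat.cast_sub h, mul_comm, mul_comm ((j : R) + 1)]
    exact_mod_cast congrArg (Nat.cast (R := R)) (Nat.choose_succ_right_eq n j).symm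
  · simp [Nat.choose_eq_zero_of_lt h, Nat.choose_eq_zero_of_lt (h.trans j.lt_succ_self)]

theorem cast_mul_choose_sub_choose_pred {R : Type*} [CommRing R] (n j : ℕ) :
    (n : R) * (n.choose (j + 1) - (n - 1).choose (j + 1)) = (j + 1) * n.choose (j + 1) := by
  cases n with
  | zero => simp
  | succ n =>
    have absorption : ((n : R) + 1) * n.choose j = (n + 1).choose (j + 1) * (j + 1) := by
      exact_mod_cast congrArg (Nat.cast (R := R)) (Nat.add_one_mul_choose_eq n j)
    have pascal : ((n + 1).choose (j + 1) : R) = n.choose j + n.choose (j + 1) := by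
      rw [Nat.choose_succ_succ, Nat.cast_add]
    rw [Nat.add_sub_cancel]
    push_cast
    linear_combination absorption + ((n : R) + 1) * pascal

theorem abs_sum_mul_choose_le {R : Type*} [CommRing R] [LinearOrder R] [IsStrictOrderedRing R]
    (w : ℕ → R) (k : ℕ) {n : ℕ} (hn : 1 ≤ n) :
    |∑ j ∈ range (k + 1), w j * n.choose j| ≤ (∑ j ∈ range (k + 1), |w j|) * (n : R) ^ k := by
  rw [sum_mul]
  refine (abs_sum_le_sum_abs _ _).trans (sum_le_sum fun j hj => ?_)
  have choose_le : n.choose j ≤ n ^ k :=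
    (Nat.choose_le_pow n j).trans (Nat.pow_le_pow_right hn (mem_range_succ_iff.mp hj))
  rw [abs_mul, Nat.abs_cast]
  gcongr
  exact_mod_cast choose_le

theorem qnum_one (n : ℕ) : qnum 1 n = n := by simp [qnum]

theorem ACoef_xPt (η θ τ s : ℝ) {q : ℝ} (hq : q ≠ 0) (k : ℕ) :
    ACoef η θ τ q (xPt η θ τ q s k) s k = 0 := by
  rw [ACoef, xPt, mul_div_cancel₀ _ (pow_ne_zero k hq), aCoef]
  ring

section QOne

variable (η θ τ s y : ℝ)

theorem aCoef_one (n : ℕ) : aCoef η θ τ 1 n = η⁻¹ + θ * n + n ^ 2 * η * τ := by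
  rw [aCoef, qnum_one]

theorem cCoef_one (n : ℕ) : cCoef η τ 1 s n = η * (s + τ * (n - 1)) * n := by
  cases n <;> simp [cCoef, qnum_one]

theorem bCoef_one (n : ℕ) :
    bCoef η θ τ 1 s n = aCoef η θ τ 1 n + cCoef η τ 1 s n - η⁻¹ := by
  simp only [bCoef, aCoef, cCoef, qnum_one]
  cases n <;> push_cast [Nat.add_sub_cancel] <;> ring

theorem ACoef_one (n : ℕ) : ACoef η θ τ 1 y s n = aCoef η θ τ 1 n + y - s * η * n := by
  simp [ACoef, qnum_one]

variable {η θ τ} in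
theorem aCoef_one_pos (hη : 0 < η) (hθ : 0 ≤ θ) (hτ : 0 ≤ τ) (n : ℕ) : 0 < aCoef η θ τ 1 n := by
  rw [aCoef_one]
  positivity

/-- The second-order difference operator annihilating `n ↦ (-1)^n p_n(y; s)` at `q = 1`.
At `n = 0` the junk value `u (0 - 1) = u 0` has coefficient `c_0 = 0`. -/
noncomputable def diffOp : (ℕ → ℝ) →ₗ[ℝ] ℕ → ℝ where
  toFun u n := aCoef η θ τ 1 n * (u (n + 1) - u n) - cCoef η τ 1 s n * (u n - u (n - 1))
    + (y + η⁻¹) * u n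
  map_add' u v := by
    ext n
    simp only [Pi.add_apply]
    ring
  map_smul' r u := by
    ext n
    simp only [Pi.smul_apply, smul_eq_mul, RingHom.id_apply]
    ring

theorem diffOp_apply (u : ℕ → ℝ) (n : ℕ) :
    diffOp η θ τ s y u n = aCoef η θ τ 1 n * (u (n + 1) - u n)
      - cCoef η τ 1 s n * (u n - u (n - 1)) + (y + η⁻¹) * u n :=
  rfl

variable {η θ τ s y} in
theorem diffOp_neg_one_pow_mul {u : ℕ → ℝ}
    (hu : ∀ n, y * u n = aCoef η θ τ 1 n * u (n + 1) + bCoef η θ τ 1 s n * u n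
      + cCoef η τ 1 s n * u (n - 1)) :
    diffOp η θ τ s y (fun n => (-1) ^ n * u n) = 0 := by
  ext n
  have rec_n := hu n
  rw [bCoef_one] at rec_n
  rw [diffOp_apply, Pi.zero_apply]
  cases n with
  | zero =>
    have c_zero : cCoef η τ 1 s 0 = 0 := by simp [cCoef_one]
    rw [c_zero] at rec_n ⊢
    linear_combination rec_n
  | succ n =>
    rw [Nat.add_sub_cancel] at rec_n ⊢
    linear_combination (-1) ^ (n + 1) * rec_n

variable {η θ τ s y} in
theorem eq_zero_of_diffOp_eq_zero (ha : ∀ n, aCoef η θ τ 1 n ≠ 0) {u : ℕ → ℝ} (hu0 : u 0 = 0)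
    (hu : diffOp η θ τ s y u = 0) : u = 0 := by
  ext n
  induction n using Nat.strong_induction_on with
  | _ n ih =>
    cases n with
    | zero => exact hu0
    | succ n =>
      have hn : u n = 0 := ih n n.lt_succ_self
      have hpred : u (n - 1) = 0 := ih (n - 1) (by omega)
      have eq_n := congrFun hu n
      rw [diffOp_apply, hn, hpred] at eq_n
      simpa [ha n] using eq_n

theorem diffOp_one (n : ℕ) : diffOp η θ τ s y 1 n = ACoef η θ τ 1 y s 0 := by
  simp [diffOp_apply, ACoef_one, aCoef_one, add_comm]

theorem diffOp_choose_succ (j n : ℕ) :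
    diffOp η θ τ s y (fun n => n.choose (j + 1)) n =
      ACoef η θ τ 1 y s (j + 1) * n.choose (j + 1) + aCoef η θ τ 1 j * n.choose j := by
  have pascal : ((n + 1).choose (j + 1) : ℝ) = n.choose j + n.choose (j + 1) := by
    rw [Nat.choose_succ_succ, Nat.cast_add]
  simp only [diffOp_apply, ACoef_one, aCoef_one, cCoef_one, pascal]
  push_cast
  linear_combination (-η * (s + τ * (n - 1))) * cast_mul_choose_sub_choose_pred (R := ℝ) n j
    + (θ + η * τ * (n + j)) * cast_sub_mul_choose (R := ℝ) n j

/-- The coefficient `∏_{i < j} (-A_i(y, s) / a_i)` of `n.choose j` in the expansion of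
`(-1)^n p_n(y; s)` at `q = 1`. -/
noncomputable def binomCoeff (j : ℕ) : ℝ :=
  ∏ i ∈ range j, -ACoef η θ τ 1 y s i / aCoef η θ τ 1 i

variable {η θ τ} in
theorem binomCoeff_succ_mul {j : ℕ} (ha : aCoef η θ τ 1 j ≠ 0) :
    binomCoeff η θ τ s y (j + 1) * aCoef η θ τ 1 j =
      -(ACoef η θ τ 1 y s j * binomCoeff η θ τ s y j) := by
  rw [binomCoeff, prod_range_succ, ← binomCoeff]
  field_simp

/-- The part of degree at most `m` of the binomial expansion of `n ↦ (-1)^n p_n(y; s)` at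
`q = 1`, used as an exact solution of the difference equation when `A_m(y, s) = 0`. -/
noncomputable def binomSum (m : ℕ) : ℕ → ℝ :=
  fun n => ∑ j ∈ range (m + 1), binomCoeff η θ τ s y j * n.choose j

theorem binomSum_apply_zero (m : ℕ) : binomSum η θ τ s y m 0 = 1 := by
  simp [binomSum, sum_range_succ', binomCoeff]

theorem binomSum_zero : binomSum η θ τ s y 0 = 1 := by
  ext n
  simp [binomSum, binomCoeff]

theorem binomSum_succ (m : ℕ) :
    binomSum η θ τ s y (m + 1) = binomSum η θ τ s y m
      + binomCoeff η θ τ s y (m + 1) • fun n => (n.choose (m + 1) : ℝ) := by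
  ext n
  exact sum_range_succ _ _

variable {η θ τ} in
theorem diffOp_binomSum (ha : ∀ n, aCoef η θ τ 1 n ≠ 0) (m n : ℕ) :
    diffOp η θ τ s y (binomSum η θ τ s y m) n =
      ACoef η θ τ 1 y s m * binomCoeff η θ τ s y m * n.choose m := by
  induction m with
  | zero => simp [binomSum_zero, diffOp_one, binomCoeff]
  | succ m ih =>
    rw [binomSum_succ, map_add, map_smul, Pi.add_apply, Pi.smul_apply, ih, diffOp_choose_succ,
      smul_eq_mul]
    linear_combination (n.choose m : ℝ) * binomCoeff_succ_mul s y (ha m)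

variable {η θ τ s y} in
theorem neg_one_pow_mul_eq_binomSum (ha : ∀ n, aCoef η θ τ 1 n ≠ 0) {k : ℕ}
    (hk : ACoef η θ τ 1 y s k = 0) {u : ℕ → ℝ} (hu0 : u 0 = 1)
    (hu : ∀ n, y * u n = aCoef η θ τ 1 n * u (n + 1) + bCoef η θ τ 1 s n * u n
      + cCoef η τ 1 s n * u (n - 1)) (n : ℕ) :
    (-1) ^ n * u n = binomSum η θ τ s y k n := by
  have binomSum_solves : diffOp η θ τ s y (binomSum η θ τ s y k) = 0 := by
    ext n
    simp [diffOp_binomSum s y ha, hk]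
  have diff_eq_zero : (fun n => (-1) ^ n * u n) - binomSum η θ τ s y k = 0 := by
    apply eq_zero_of_diffOp_eq_zero ha (s := s) (y := y)
    · simp [hu0, binomSum_apply_zero]
    · rw [map_sub, diffOp_neg_one_pow_mul hu, binomSum_solves, sub_zero]
  exact congrFun (sub_eq_zero.mp diff_eq_zero) n

end QOne

theorem stmt10_general (η θ τ s : ℝ) (ha : ∀ n, aCoef η θ τ 1 n ≠ 0) (k : ℕ)
    (p : ℕ → ℝ → ℝ)
    (hp0 : ∀ y : ℝ, p 0 y = 1)
    (hprec : ∀ (n : ℕ) (y : ℝ), y * p n y =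
      aCoef η θ τ 1 n * p (n + 1) y + bCoef η θ τ 1 s n * p n y
        + cCoef η τ 1 s n * p (n - 1) y) :
    ∃ c : ℝ, 0 ≤ c ∧ ∀ n : ℕ, 1 ≤ n → |p n (xPt η θ τ 1 s k)| ≤ c * (n : ℝ) ^ k := by
  set x := xPt η θ τ 1 s k
  have A_zero : ACoef η θ τ 1 x s k = 0 := ACoef_xPt η θ τ s one_ne_zero k
  refine ⟨∑ j ∈ range (k + 1), |binomCoeff η θ τ s x j|, by positivity, fun n hn => ?_⟩
  calc |p n x| = |(-1) ^ n * p n x| := by simp [abs_mul]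
    _ = |binomSum η θ τ s x k n| := by
      rw [neg_one_pow_mul_eq_binomSum ha A_zero (hp0 x) (hprec · x)]
    _ ≤ _ := abs_sum_mul_choose_le _ k hn

/-- for `q = 1`, `η > 0`, `θ ≥ 0`, `τ ≥ 0`, `s > 0` and `k ≥ 0`, there is a
constant `c ≥ 0` (independent of `n`) with `|p_n(x_k(s);s)| ≤ c n^k` for all `n ≥ 1`.
(Here the general definitions are specialized at `q = 1`, where `[n]_1 = n`.) -/
theorem stmt10 (η θ τ s : ℝ)
    (hη : 0 < η) (hθ : 0 ≤ θ) (hτ : 0 ≤ τ) (hs : 0 < s)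
    (k : ℕ)
    (p : ℕ → ℝ → ℝ)
    (hp0 : ∀ y : ℝ, p 0 y = 1)
    (hprec : ∀ (n : ℕ) (y : ℝ), y * p n y =
      aCoef η θ τ 1 n * p (n + 1) y + bCoef η θ τ 1 s n * p n y
        + cCoef η τ 1 s n * p (n - 1) y) :
    ∃ c : ℝ, 0 ≤ c ∧ ∀ n : ℕ, 1 ≤ n → |p n (xPt η θ τ 1 s k)| ≤ c * (n : ℝ) ^ k :=
  stmt10_general η θ τ s (fun n => (aCoef_one_pos hη hθ hτ n).ne') k p hp0 hprec
end
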